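/- arXiv:1603.09218 — 4 statements merged into one kernel-verified Lean document; each statement's English description precedes it below -/
import Mathlib

section
/- In the subalgebra H⁺_{t,q} of H_{t,q} generated by T, T⁻¹, X₁, X₂, Y₁, Y₂, the multiplicative set {(Y₁Y₂)^a(X₁X₂)^b : a, b ∈ ℕ₀} satisfies the two-sided Ore condition; likewise, in the subalgebra 𝒜⁺ of 𝒜 generated by P₁, P₂, Q₁, Q₂, R, the multiplicative set {Q₂^aP₂^b : a, b ∈ ℕ₀} satisfies the two-sided Ore condition. -/
noncomputable section

/-- Generators of the double affine Hecke algebra of type GL₂: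
`T, T⁻¹, X₁, X₁⁻¹, X₂, X₂⁻¹, Y₁, Y₁⁻¹, Y₂, Y₂⁻¹`. -/
inductive DGen : Type
  | T | Ti | X1 | X1i | X2 | X2i | Y1 | Y1i | Y2 | Y2i

abbrev FD : Type := FreeAlgebra ℂ DGen

def gD : DGen → FD := FreeAlgebra.ι ℂ

/-- The defining relations of the double affine Hecke algebra `H_{t,q}` of type GL₂. -/
inductive DRel (q t : ℂ) : FD → FD → Prop
  | TTi : DRel q t (gD .T * gD .Ti) 1
  | TiT : DRel q t (gD .Ti * gD .T) 1
  | X1X1i : DRel q t (gD .X1 * gD .X1i) 1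
  | X1iX1 : DRel q t (gD .X1i * gD .X1) 1
  | X2X2i : DRel q t (gD .X2 * gD .X2i) 1
  | X2iX2 : DRel q t (gD .X2i * gD .X2) 1
  | Y1Y1i : DRel q t (gD .Y1 * gD .Y1i) 1
  | Y1iY1 : DRel q t (gD .Y1i * gD .Y1) 1
  | Y2Y2i : DRel q t (gD .Y2 * gD .Y2i) 1
  | Y2iY2 : DRel q t (gD .Y2i * gD .Y2) 1
  | TX1T : DRel q t (gD .T * gD .X1 * gD .T) (gD .X2)
  | TiY1Ti : DRel q t (gD .Ti * gD .Y1 * gD .Ti) (gD .Y2)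
  | Xcomm : DRel q t (gD .X1 * gD .X2) (gD .X2 * gD .X1)
  | Ycomm : DRel q t (gD .Y1 * gD .Y2) (gD .Y2 * gD .Y1)
  | YXX : DRel q t (gD .Y1 * (gD .X1 * gD .X2)) ((q ^ 2) • (gD .X1 * gD .X2 * gD .Y1))
  | X1iY2 : DRel q t (gD .X1i * gD .Y2) (gD .Y2 * gD .X1i * gD .Ti * gD .Ti)
  | hecke : DRel q t ((gD .T + algebraMap ℂ FD t⁻¹) * (gD .T - algebraMap ℂ FD t)) 0

/-- The double affine Hecke algebra `H_{t,q}` of type GL₂. -/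
abbrev DAHA (q t : ℂ) : Type := RingQuot (DRel q t)

variable (q t : ℂ)

def T : DAHA q t := RingQuot.mkAlgHom ℂ (DRel q t) (gD .T)
def Ti : DAHA q t := RingQuot.mkAlgHom ℂ (DRel q t) (gD .Ti)
def X1 : DAHA q t := RingQuot.mkAlgHom ℂ (DRel q t) (gD .X1)
def X1i : DAHA q t := RingQuot.mkAlgHom ℂ (DRel q t) (gD .X1i)
def X2 : DAHA q t := RingQuot.mkAlgHom ℂ (DRel q t) (gD .X2)
def X2i : DAHA q t := RingQuot.mkAlgHom ℂ (DRel q t) (gD .X2i)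
def Y1 : DAHA q t := RingQuot.mkAlgHom ℂ (DRel q t) (gD .Y1)
def Y1i : DAHA q t := RingQuot.mkAlgHom ℂ (DRel q t) (gD .Y1i)
def Y2 : DAHA q t := RingQuot.mkAlgHom ℂ (DRel q t) (gD .Y2)
def Y2i : DAHA q t := RingQuot.mkAlgHom ℂ (DRel q t) (gD .Y2i)

/-- Generators of the algebra `𝒜`: `P₁, P₂, P₂⁻¹, Q₁, Q₂, Q₂⁻¹, R`. -/
inductive AGen : Type
  | P1 | P2 | P2i | Q1 | Q2 | Q2i | R

abbrev FA : Type := FreeAlgebra ℂ AGen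

def gA : AGen → FA := FreeAlgebra.ι ℂ

/-- The defining relations of the algebra `𝒜`. -/
inductive ARel (q t : ℂ) : FA → FA → Prop
  | P2P2i : ARel q t (gA .P2 * gA .P2i) 1
  | P2iP2 : ARel q t (gA .P2i * gA .P2) 1
  | Q2Q2i : ARel q t (gA .Q2 * gA .Q2i) 1
  | Q2iQ2 : ARel q t (gA .Q2i * gA .Q2) 1
  | P2P1 : ARel q t (gA .P2 * gA .P1) (gA .P1 * gA .P2)
  | Q2Q1 : ARel q t (gA .Q2 * gA .Q1) (gA .Q1 * gA .Q2)
  | P2Q2 : ARel q t (gA .P2 * gA .Q2) ((q⁻¹ ^ 4) • (gA .Q2 * gA .P2))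
  | P2Q1 : ARel q t (gA .P2 * gA .Q1) ((q⁻¹ ^ 2) • (gA .Q1 * gA .P2))
  | P1Q2 : ARel q t (gA .P1 * gA .Q2) ((q⁻¹ ^ 2) • (gA .Q2 * gA .P1))
  | P1Q1 : ARel q t (gA .P1 * gA .Q1)
      (gA .Q1 * gA .P1 + (q⁻¹ ^ 2 - 1) • gA .R)
  | P2R : ARel q t (gA .P2 * gA .R) ((q⁻¹ ^ 2) • (gA .R * gA .P2))
  | RQ2 : ARel q t (gA .R * gA .Q2) ((q⁻¹ ^ 2) • (gA .Q2 * gA .R))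
  | P1R : ARel q t (gA .P1 * gA .R)
      ((q⁻¹ ^ 2) • (gA .R * gA .P1) + (1 - q⁻¹ ^ 2) • (gA .Q1 * gA .P2))
  | RQ1 : ARel q t (gA .R * gA .Q1)
      ((q⁻¹ ^ 2) • (gA .Q1 * gA .R) + (1 - q⁻¹ ^ 2) • (gA .Q2 * gA .P1))
  | RR : ARel q t (gA .R * gA .R)
      (((1 + t ^ 2) * (q⁻¹ ^ 2 + t⁻¹ ^ 2)) • (gA .Q2 * gA .P2)
        - (q⁻¹ ^ 2) • (gA .Q2 * gA .P1 * gA .P1)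
        - (q⁻¹ ^ 2) • (gA .Q1 * gA .Q1 * gA .P2)
        + (q⁻¹ ^ 2) • (gA .Q1 * gA .R * gA .P1))

/-- The algebra `𝒜`. -/
abbrev AlgA (q t : ℂ) : Type := RingQuot (ARel q t)

variable (q t : ℂ)

def P1 : AlgA q t := RingQuot.mkAlgHom ℂ (ARel q t) (gA .P1)
def P2 : AlgA q t := RingQuot.mkAlgHom ℂ (ARel q t) (gA .P2)
def P2i : AlgA q t := RingQuot.mkAlgHom ℂ (ARel q t) (gA .P2i)
def Q1 : AlgA q t := RingQuot.mkAlgHom ℂ (ARel q t) (gA .Q1)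
def Q2 : AlgA q t := RingQuot.mkAlgHom ℂ (ARel q t) (gA .Q2)
def Q2i : AlgA q t := RingQuot.mkAlgHom ℂ (ARel q t) (gA .Q2i)
def R : AlgA q t := RingQuot.mkAlgHom ℂ (ARel q t) (gA .R)

/-- The subalgebra `H⁺_{t,q}` of `H_{t,q}`, generated by `T, T⁻¹, X₁, X₂, Y₁, Y₂`. -/
def Hplus (q t : ℂ) : Subalgebra ℂ (DAHA q t) :=
  Algebra.adjoin ℂ {T q t, Ti q t, X1 q t, X2 q t, Y1 q t, Y2 q t}

/-- The subalgebra `𝒜⁺` of `𝒜`, generated by `P₁, P₂, Q₁, Q₂, R`. -/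
def Aplus (q t : ℂ) : Subalgebra ℂ (AlgA q t) :=
  Algebra.adjoin ℂ {P1 q t, P2 q t, Q1 q t, Q2 q t, R q t}

section helpers

variable {A : Type} [Ring A] [Algebra ℂ A]

def NormEl (B : Subalgebra ℂ A) (s : A) : Prop :=
  ∀ h ∈ B, (∃ h' ∈ B, s * h = h' * s) ∧ (∃ h'' ∈ B, h * s = s * h'')

theorem NormEl.one (B : Subalgebra ℂ A) : NormEl B 1 :=
  fun h hh => ⟨⟨h, hh, by simp⟩, ⟨h, hh, by simp⟩⟩

theorem NormEl.mul {B : Subalgebra ℂ A} {s u : A} (hs : NormEl B s) (hu : NormEl B u) :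
    NormEl B (s * u) := by
  intro h hh
  constructor
  · obtain ⟨h1, m1, e1⟩ := (hu h hh).1
    obtain ⟨h2, m2, e2⟩ := (hs h1 m1).1
    exact ⟨h2, m2, by rw [mul_assoc, e1, ← mul_assoc, e2, mul_assoc]⟩
  · obtain ⟨h1, m1, e1⟩ := (hs h hh).2
    obtain ⟨h2, m2, e2⟩ := (hu h1 m1).2
    exact ⟨h2, m2, by rw [← mul_assoc, e1, mul_assoc, e2, mul_assoc]⟩

theorem NormEl.pow {B : Subalgebra ℂ A} {s : A} (hs : NormEl B s) (n : ℕ) :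
    NormEl B (s ^ n) := by
  induction n with
  | zero => simpa using NormEl.one B
  | succ k ih => rw [pow_succ]; exact ih.mul hs

theorem NormEl.adjoin {S : Set A} {s : A}
    (H : ∀ x ∈ S, ∃ c : ℂ, c ≠ 0 ∧ s * x = c • (x * s)) :
    NormEl (Algebra.adjoin ℂ S) s := by
  intro h hh
  induction hh using Algebra.adjoin_induction with
  | mem x hx =>
    obtain ⟨c, hc, e⟩ := H x hx
    have hx' := Algebra.subset_adjoin (R := ℂ) hx
    refine ⟨⟨c • x, Subalgebra.smul_mem _ hx' c, by rw [e, smul_mul_assoc]⟩,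
      ⟨c⁻¹ • x, Subalgebra.smul_mem _ hx' _, ?_⟩⟩
    rw [mul_smul_comm, e, smul_smul, inv_mul_cancel₀ hc, one_smul]
  | algebraMap r =>
    exact ⟨⟨_, Subalgebra.algebraMap_mem _ r, (Algebra.commutes r s).symm⟩,
      ⟨_, Subalgebra.algebraMap_mem _ r, Algebra.commutes r s⟩⟩
  | add x y _ _ hx hy =>
    obtain ⟨⟨x1, mx1, ex1⟩, ⟨x2, mx2, ex2⟩⟩ := hx
    obtain ⟨⟨y1, my1, ey1⟩, ⟨y2, my2, ey2⟩⟩ := hy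
    exact ⟨⟨_, add_mem mx1 my1, by rw [mul_add, add_mul, ex1, ey1]⟩,
      ⟨_, add_mem mx2 my2, by rw [mul_add, add_mul, ex2, ey2]⟩⟩
  | mul x y _ _ hx hy =>
    obtain ⟨⟨x1, mx1, ex1⟩, ⟨x2, mx2, ex2⟩⟩ := hx
    obtain ⟨⟨y1, my1, ey1⟩, ⟨y2, my2, ey2⟩⟩ := hy
    exact ⟨⟨_, mul_mem mx1 my1, by rw [← mul_assoc, ex1, mul_assoc, ey1, mul_assoc]⟩,
      ⟨_, mul_mem mx2 my2, by rw [mul_assoc, ey2, ← mul_assoc, ex2, mul_assoc]⟩⟩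

theorem qc_symm {s x : A} {c : ℂ} (hc : c ≠ 0) (h : x * s = c • (s * x)) :
    s * x = c⁻¹ • (x * s) := by
  rw [h, smul_smul, inv_mul_cancel₀ hc, one_smul]

theorem qc_mul {s x y : A} {c d : ℂ} (hx : s * x = c • (x * s)) (hy : s * y = d • (y * s)) :
    s * (x * y) = (c * d) • (x * y * s) := by
  rw [← mul_assoc, hx, smul_mul_assoc, mul_assoc, hy, mul_smul_comm, smul_smul, mul_assoc]

theorem comm_inv {s x y : A} (h1 : x * y = 1) (h2 : y * x = 1) (h : s * x = x * s) :
    s * y = y * s := by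
  calc s * y = (y * x) * (s * y) := by rw [h2, one_mul]
    _ = y * (x * s) * y := by simp only [mul_assoc]
    _ = y * s * (x * y) := by rw [← h]; simp only [mul_assoc]
    _ = y * s := by rw [h1, mul_one]

/-- `T` commutes with `X₁X₂`. -/
theorem comm_T {T X1 X2 : A} (hX : T * X1 * T = X2) (hc : X1 * X2 = X2 * X1) :
    (X1 * X2) * T = T * (X1 * X2) := by
  rw [hc]
  conv_rhs => rw [← hc, ← mul_assoc]
  subst hX
  simp only [mul_assoc]

theorem key {T Ti X1 X1i X2 Y1 Y2 : A} {c : ℂ} (h1 : T * Ti = 1) (h2 : Ti * T = 1)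
    (x1 : X1 * X1i = 1) (x2 : X1i * X1 = 1)
    (hX : T * X1 * T = X2) (hY : Ti * Y1 * Ti = Y2)
    (hcX : X1 * X2 = X2 * X1) (hcY : Y1 * Y2 = Y2 * Y1)
    (hZ : Y1 * (X1 * X2) = c • (X1 * X2 * Y1))
    (hr : X1i * Y2 = Y2 * X1i * Ti * Ti) :
    (Y1 * Y2) * X1 = c • (X1 * (Y1 * Y2)) := by
  have e1 : X1i * Y2 * T * T = Y2 * X1i := by
    rw [hr]
    calc Y2 * X1i * Ti * Ti * T * T = Y2 * X1i * (Ti * (Ti * T) * T) := by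
          simp only [mul_assoc]
      _ = Y2 * X1i := by rw [h2, mul_one, h2, mul_one]
  have e2 : Y2 * T * T * X1 = X1 * Y2 := by
    calc Y2 * T * T * X1 = X1 * (X1i * Y2 * T * T) * X1 := by
          simp only [← mul_assoc]; rw [x1, one_mul]
      _ = X1 * Y2 := by rw [e1]; simp only [mul_assoc]; rw [x2, mul_one]
  have hY' : Y1 = T * Y2 * T := by
    rw [← hY]
    calc Y1 = (T * Ti) * Y1 * (Ti * T) := by rw [h1, h2, one_mul, mul_one]
      _ = _ := by simp only [mul_assoc]
  have e3 : Y1 * X1 = c • (T * T * X1 * Y1) := by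
    have f : Y1 * X1 * (T * X1 * T) = c • (T * T * X1 * Y1) * (T * X1 * T) := by
      have g1 : T * T * X1 * Y1 * (T * X1 * T) = X1 * X2 * Y1 := by
        calc T * T * X1 * Y1 * (T * X1 * T)
            = T * T * X1 * T * (Y2 * T * T * X1) * T := by
              rw [hY']; simp only [mul_assoc]
          _ = T * (T * X1 * T) * X1 * Y2 * T := by rw [e2]; simp only [mul_assoc]
          _ = T * (X1 * X2) * Y2 * T := by rw [hX, hcX]; simp only [mul_assoc]
          _ = X1 * X2 * Y1 := by
              rw [← comm_T hX hcX, hY']; simp only [mul_assoc]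
      rw [smul_mul_assoc, g1, ← hZ, hX, mul_assoc]
    have inv : (T * X1 * T) * (Ti * X1i * Ti) = 1 := by
      calc (T * X1 * T) * (Ti * X1i * Ti) = T * (X1 * (T * Ti) * X1i) * Ti := by
            simp only [mul_assoc]
        _ = 1 := by rw [h1, mul_one, x1, mul_one, h1]
    have := congrArg (· * (Ti * X1i * Ti)) f
    simpa only [mul_assoc _ (T * X1 * T), inv, mul_one] using this
  calc (Y1 * Y2) * X1 = Y2 * (Y1 * X1) := by rw [hcY, mul_assoc]
    _ = c • (Y2 * T * T * X1 * Y1) := by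
        rw [e3, mul_smul_comm]; simp only [mul_assoc]
    _ = c • (X1 * (Y1 * Y2)) := by rw [e2, hcY]; simp only [mul_assoc]

end helpers

/-- In the subalgebra `H⁺_{t,q}` of `H_{t,q}` generated by
`T, T⁻¹, X₁, X₂, Y₁, Y₂`, the multiplicative set `{(Y₁Y₂)^a(X₁X₂)^b : a, b ∈ ℕ₀}`
satisfies the two-sided Ore condition; likewise, in the subalgebra `𝒜⁺` of `𝒜`
generated by `P₁, P₂, Q₁, Q₂, R`, the multiplicative set `{Q₂^aP₂^b : a, b ∈ ℕ₀}`
satisfies the two-sided Ore condition. -/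
theorem stmt10 (q t : ℂ) (hq : q ≠ 0) (ht : t ≠ 0) :
    (∀ h ∈ Hplus q t, ∀ a b : ℕ,
      (∃ h' ∈ Hplus q t, ∃ a' b' : ℕ,
        ((Y1 q t * Y2 q t) ^ a' * (X1 q t * X2 q t) ^ b') * h
          = h' * ((Y1 q t * Y2 q t) ^ a * (X1 q t * X2 q t) ^ b)) ∧
      (∃ h'' ∈ Hplus q t, ∃ a'' b'' : ℕ,
        h * ((Y1 q t * Y2 q t) ^ a'' * (X1 q t * X2 q t) ^ b'')
          = ((Y1 q t * Y2 q t) ^ a * (X1 q t * X2 q t) ^ b) * h'')) ∧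
    (∀ x ∈ Aplus q t, ∀ a b : ℕ,
      (∃ x' ∈ Aplus q t, ∃ a' b' : ℕ,
        (Q2 q t ^ a' * P2 q t ^ b') * x = x' * (Q2 q t ^ a * P2 q t ^ b)) ∧
      (∃ x'' ∈ Aplus q t, ∃ a'' b'' : ℕ,
        x * (Q2 q t ^ a'' * P2 q t ^ b'') = (Q2 q t ^ a * P2 q t ^ b) * x'')) := by
  have ore : ∀ {A : Type} [Ring A] [Algebra ℂ A] (B : Subalgebra ℂ A) (u v : A),
      NormEl B u → NormEl B v → ∀ h ∈ B, ∀ a b : ℕ,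
      (∃ h' ∈ B, ∃ a' b' : ℕ, (u ^ a' * v ^ b') * h = h' * (u ^ a * v ^ b)) ∧
      (∃ h'' ∈ B, ∃ a'' b'' : ℕ, h * (u ^ a'' * v ^ b'') = (u ^ a * v ^ b) * h'') := by
    intro A _ _ B u v hu hv h hh a b
    obtain ⟨⟨h1, m1, e1⟩, ⟨h2, m2, e2⟩⟩ := ((hu.pow a).mul (hv.pow b)) h hh
    exact ⟨⟨h1, m1, a, b, e1⟩, ⟨h2, m2, a, b, e2⟩⟩
  have q2 : q ^ 2 ≠ 0 := pow_ne_zero _ hq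
  have i2 : q⁻¹ ^ 2 ≠ 0 := pow_ne_zero _ (inv_ne_zero hq)
  have i4 : q⁻¹ ^ 4 ≠ 0 := pow_ne_zero _ (inv_ne_zero hq)
  constructor
  · have rel {a b} (h : DRel q t a b) := RingQuot.mkAlgHom_rel ℂ h
    have TTi : T q t * Ti q t = 1 := by simpa [T, Ti, X1, X1i, X2, Y1, Y2] using rel .TTi
    have TiT : Ti q t * T q t = 1 := by simpa [T, Ti, X1, X1i, X2, Y1, Y2] using rel .TiT
    have x1 : X1 q t * X1i q t = 1 := by simpa [T, Ti, X1, X1i, X2, Y1, Y2] using rel .X1X1i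
    have x2 : X1i q t * X1 q t = 1 := by simpa [T, Ti, X1, X1i, X2, Y1, Y2] using rel .X1iX1
    have hX : T q t * X1 q t * T q t = X2 q t := by simpa [T, Ti, X1, X1i, X2, Y1, Y2] using rel .TX1T
    have hY : Ti q t * Y1 q t * Ti q t = Y2 q t := by simpa [T, Ti, X1, X1i, X2, Y1, Y2] using rel .TiY1Ti
    have cX : X1 q t * X2 q t = X2 q t * X1 q t := by simpa [T, Ti, X1, X1i, X2, Y1, Y2] using rel .Xcomm
    have cY : Y1 q t * Y2 q t = Y2 q t * Y1 q t := by simpa [T, Ti, X1, X1i, X2, Y1, Y2] using rel .Ycomm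
    have hZ : Y1 q t * (X1 q t * X2 q t) = q ^ 2 • (X1 q t * X2 q t * Y1 q t) := by
      simpa [T, Ti, X1, X1i, X2, Y1, Y2] using rel .YXX
    have hr : X1i q t * Y2 q t = Y2 q t * X1i q t * Ti q t * Ti q t := by
      simpa [T, Ti, X1, X1i, X2, Y1, Y2] using rel .X1iY2
    have k := key TTi TiT x1 x2 hX hY cX cY hZ hr
    have ZT := comm_T hX cX
    have ZTi := comm_inv TTi TiT ZT
    have WTi := comm_T hY cY
    have WT := comm_inv TiT TTi WTi
    have one {x y : DAHA q t} (h : x * y = y * x) : x * y = (1 : ℂ) • (y * x) := by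
      rw [one_smul, h]
    have ZY1 := qc_symm q2 hZ
    have ZY2 := qc_mul (qc_mul (one ZTi) ZY1) (one ZTi)
    rw [hY] at ZY2
    have WX2 := qc_mul (qc_mul (one WT) k) (one WT)
    rw [hX] at WX2
    have ZX1 : (X1 q t * X2 q t) * X1 q t = X1 q t * (X1 q t * X2 q t) := by
      rw [mul_assoc, cX]
    have ZX2 : (X1 q t * X2 q t) * X2 q t = X2 q t * (X1 q t * X2 q t) := by
      rw [← mul_assoc, cX]
    have WY1 : (Y1 q t * Y2 q t) * Y1 q t = Y1 q t * (Y1 q t * Y2 q t) := by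
      rw [mul_assoc, cY]
    have WY2 : (Y1 q t * Y2 q t) * Y2 q t = Y2 q t * (Y1 q t * Y2 q t) := by
      rw [← mul_assoc, cY]
    refine ore (Hplus q t) _ _ (NormEl.adjoin ?_) (NormEl.adjoin ?_)
    · rintro x (rfl | rfl | rfl | rfl | rfl | rfl)
      · exact ⟨_, one_ne_zero, one WT⟩
      · exact ⟨_, one_ne_zero, one WTi⟩
      · exact ⟨_, q2, k⟩
      · exact ⟨_, by simpa using hq, WX2⟩
      · exact ⟨_, one_ne_zero, one WY1⟩
      · exact ⟨_, one_ne_zero, one WY2⟩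
    · rintro x (rfl | rfl | rfl | rfl | rfl | rfl)
      · exact ⟨_, one_ne_zero, one ZT⟩
      · exact ⟨_, one_ne_zero, one ZTi⟩
      · exact ⟨_, one_ne_zero, one ZX1⟩
      · exact ⟨_, one_ne_zero, one ZX2⟩
      · exact ⟨_, inv_ne_zero q2, ZY1⟩
      · exact ⟨_, by simpa using hq, ZY2⟩
  · have rel {a b} (h : ARel q t a b) := RingQuot.mkAlgHom_rel ℂ h
    have one {x y : AlgA q t} (h : x * y = y * x) : x * y = (1 : ℂ) • (y * x) := by
      rw [one_smul, h]
    have P2P1 : P2 q t * P1 q t = P1 q t * P2 q t := by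
      simpa only [P1, P2, Q1, Q2, R, map_mul] using rel .P2P1
    have Q2Q1 : Q2 q t * Q1 q t = Q1 q t * Q2 q t := by
      simpa only [P1, P2, Q1, Q2, R, map_mul] using rel .Q2Q1
    have P2Q2 : P2 q t * Q2 q t = (q⁻¹ ^ 4) • (Q2 q t * P2 q t) := by
      simpa only [P1, P2, Q1, Q2, R, map_mul, map_smul] using rel .P2Q2
    have P2Q1 : P2 q t * Q1 q t = (q⁻¹ ^ 2) • (Q1 q t * P2 q t) := by
      simpa only [P1, P2, Q1, Q2, R, map_mul, map_smul] using rel .P2Q1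
    have P1Q2 : P1 q t * Q2 q t = (q⁻¹ ^ 2) • (Q2 q t * P1 q t) := by
      simpa only [P1, P2, Q1, Q2, R, map_mul, map_smul] using rel .P1Q2
    have P2R : P2 q t * R q t = (q⁻¹ ^ 2) • (R q t * P2 q t) := by
      simpa only [P1, P2, Q1, Q2, R, map_mul, map_smul] using rel .P2R
    have RQ2 : R q t * Q2 q t = (q⁻¹ ^ 2) • (Q2 q t * R q t) := by
      simpa only [P1, P2, Q1, Q2, R, map_mul, map_smul] using rel .RQ2
    refine ore (Aplus q t) _ _ (NormEl.adjoin ?_) (NormEl.adjoin ?_)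
    · rintro x (rfl | rfl | rfl | rfl | rfl)
      · exact ⟨_, inv_ne_zero i2, qc_symm i2 P1Q2⟩
      · exact ⟨_, inv_ne_zero i4, qc_symm i4 P2Q2⟩
      · exact ⟨_, one_ne_zero, one Q2Q1⟩
      · exact ⟨_, one_ne_zero, one rfl⟩
      · exact ⟨_, inv_ne_zero i2, qc_symm i2 RQ2⟩
    · rintro x (rfl | rfl | rfl | rfl | rfl)
      · exact ⟨_, one_ne_zero, one P2P1⟩
      · exact ⟨_, one_ne_zero, one rfl⟩
      · exact ⟨_, i2, P2Q1⟩
      · exact ⟨_, i4, P2Q2⟩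
      · exact ⟨_, i2, P2R⟩
end
end

section
/- In 𝒟q⁺(GL₂), for all i, j ∈ {1,2}: det_q(A)·a^i_j = a^i_j·det_q(A); det_q(D)·a^i_j = q⁻²·a^i_j·det_q(D); ∂^i_j·det_q(A) = q⁻²·det_q(A)·∂^i_j; and ∂^i_j·det_q(D) = det_q(D)·∂^i_j. Consequently the multiplicative set {det_q(A)^m det_q(D)^n : m, n ∈ ℕ₀} satisfies the two-sided Ore condition in 𝒟q⁺(GL₂). -/
noncomputable section

/-- Generators `a¹₁, a¹₂, a²₁, a²₂, ∂¹₁, ∂¹₂, ∂²₁, ∂²₂` of the algebra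
`𝒟q⁺(GL₂)` of quantum differential operators. -/
inductive QGen : Type
  | a11 | a12 | a21 | a22 | p11 | p12 | p21 | p22

abbrev FQ : Type := FreeAlgebra ℂ QGen

def gQ : QGen → FQ := FreeAlgebra.ι ℂ

/-- The defining relations of `𝒟q⁺(GL₂)`. -/
inductive QRel (q : ℂ) : FQ → FQ → Prop
  -- the six `a`-relations
  | a1 : QRel q (gQ .a12 * gQ .a11)
      (gQ .a11 * gQ .a12 + (1 - q⁻¹ ^ 2) • (gQ .a12 * gQ .a22))
  | a2 : QRel q (gQ .a22 * gQ .a11) (gQ .a11 * gQ .a22)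
  | a3 : QRel q (gQ .a21 * gQ .a11)
      (gQ .a11 * gQ .a21 - (1 - q⁻¹ ^ 2) • (gQ .a22 * gQ .a21))
  | a4 : QRel q (gQ .a22 * gQ .a12) ((q ^ 2) • (gQ .a12 * gQ .a22))
  | a5 : QRel q (gQ .a21 * gQ .a12)
      (gQ .a12 * gQ .a21 + (1 - q⁻¹ ^ 2) • (gQ .a11 * gQ .a22 - gQ .a22 * gQ .a22))
  | a6 : QRel q (gQ .a22 * gQ .a21) ((q⁻¹ ^ 2) • (gQ .a21 * gQ .a22))
  -- the six `∂`-relations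
  | p1 : QRel q (gQ .p12 * gQ .p11)
      (gQ .p11 * gQ .p12 + (1 - q⁻¹ ^ 2) • (gQ .p12 * gQ .p22))
  | p2 : QRel q (gQ .p22 * gQ .p11) (gQ .p11 * gQ .p22)
  | p3 : QRel q (gQ .p21 * gQ .p11)
      (gQ .p11 * gQ .p21 - (1 - q⁻¹ ^ 2) • (gQ .p22 * gQ .p21))
  | p4 : QRel q (gQ .p22 * gQ .p12) ((q ^ 2) • (gQ .p12 * gQ .p22))
  | p5 : QRel q (gQ .p21 * gQ .p12)
      (gQ .p12 * gQ .p21 + (1 - q⁻¹ ^ 2) • (gQ .p11 * gQ .p22 - gQ .p22 * gQ .p22))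
  | p6 : QRel q (gQ .p22 * gQ .p21) ((q⁻¹ ^ 2) • (gQ .p21 * gQ .p22))
  -- the sixteen cross relations
  | c1 : QRel q (gQ .p11 * gQ .a11)
      (-((1 - q⁻¹ ^ 2) • (gQ .p12 * gQ .a21)) + (q⁻¹ ^ 2) • (gQ .a11 * gQ .p11)
        + (q⁻¹ ^ 2 - q⁻¹ ^ 4) • (gQ .a12 * gQ .p21))
  | c2 : QRel q (gQ .p11 * gQ .a12)
      ((q⁻¹ ^ 2 - 1) • (gQ .p12 * gQ .a22) + (q⁻¹ ^ 2) • (gQ .a12 * gQ .p11))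
  | c3 : QRel q (gQ .p11 * gQ .a21)
      ((1 - q ^ 2) • (gQ .p21 * gQ .a11) - ((q - q⁻¹) ^ 2) • (gQ .p22 * gQ .a21)
        + gQ .a21 * gQ .p11 + (1 - q⁻¹ ^ 2) • (gQ .a22 * gQ .p21))
  | c4 : QRel q (gQ .p11 * gQ .a22)
      ((1 - q ^ 2) • (gQ .p21 * gQ .a12) - ((q - q⁻¹) ^ 2) • (gQ .p22 * gQ .a22)
        + gQ .a22 * gQ .p11)
  | c5 : QRel q (gQ .p12 * gQ .a11)
      (gQ .a11 * gQ .p12 + (1 - q⁻¹ ^ 2) • (gQ .a12 * gQ .p22)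
        + (q⁻¹ ^ 2 - 1) • (gQ .a12 * gQ .p11))
  | c6 : QRel q (gQ .p12 * gQ .a12) ((q⁻¹ ^ 2) • (gQ .a12 * gQ .p12))
  | c7 : QRel q (gQ .p12 * gQ .a21)
      ((q⁻¹ ^ 2 - 1) • (gQ .p22 * gQ .a11) + gQ .a21 * gQ .p12
        + (q⁻¹ ^ 2 - 1) • (gQ .a22 * gQ .p11) + (1 - q⁻¹ ^ 2) • (gQ .a22 * gQ .p22))
  | c8 : QRel q (gQ .p12 * gQ .a22)
      ((q⁻¹ ^ 2 - 1) • (gQ .p22 * gQ .a12) + (q⁻¹ ^ 2) • (gQ .a22 * gQ .p12))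
  | c9 : QRel q (gQ .p21 * gQ .a11)
      ((q⁻¹ ^ 2) • (gQ .a11 * gQ .p21) - (1 - q⁻¹ ^ 2) • (gQ .p22 * gQ .a21))
  | c10 : QRel q (gQ .p21 * gQ .a12)
      ((q⁻¹ ^ 2 - 1) • (gQ .p22 * gQ .a22) + gQ .a12 * gQ .p21)
  | c11 : QRel q (gQ .p21 * gQ .a21) ((q⁻¹ ^ 2) • (gQ .a21 * gQ .p21))
  | c12 : QRel q (gQ .p21 * gQ .a22) (gQ .a22 * gQ .p21)
  | c13 : QRel q (gQ .p22 * gQ .a11)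
      (gQ .a11 * gQ .p22 + (1 - q ^ 2) • (gQ .a12 * gQ .p21))
  | c14 : QRel q (gQ .p22 * gQ .a12) (gQ .a12 * gQ .p22)
  | c15 : QRel q (gQ .p22 * gQ .a21)
      ((q⁻¹ ^ 2) • (gQ .a21 * gQ .p22) + (q⁻¹ ^ 2 - 1) • (gQ .a22 * gQ .p21))
  | c16 : QRel q (gQ .p22 * gQ .a22) ((q⁻¹ ^ 2) • (gQ .a22 * gQ .p22))

/-- The algebra `𝒟q⁺(GL₂)` of quantum differential operators on `GL₂`. -/
abbrev DqPlus (q : ℂ) : Type := RingQuot (QRel q)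

def a11 (q : ℂ) : DqPlus q := RingQuot.mkAlgHom ℂ (QRel q) (gQ .a11)
def a12 (q : ℂ) : DqPlus q := RingQuot.mkAlgHom ℂ (QRel q) (gQ .a12)
def a21 (q : ℂ) : DqPlus q := RingQuot.mkAlgHom ℂ (QRel q) (gQ .a21)
def a22 (q : ℂ) : DqPlus q := RingQuot.mkAlgHom ℂ (QRel q) (gQ .a22)
def p11 (q : ℂ) : DqPlus q := RingQuot.mkAlgHom ℂ (QRel q) (gQ .p11)
def p12 (q : ℂ) : DqPlus q := RingQuot.mkAlgHom ℂ (QRel q) (gQ .p12)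
def p21 (q : ℂ) : DqPlus q := RingQuot.mkAlgHom ℂ (QRel q) (gQ .p21)
def p22 (q : ℂ) : DqPlus q := RingQuot.mkAlgHom ℂ (QRel q) (gQ .p22)

/-- The quantum determinant `det_q(A) = a¹₁a²₂ − q²a¹₂a²₁`. -/
def detA (q : ℂ) : DqPlus q := a11 q * a22 q - (q ^ 2) • (a12 q * a21 q)

/-- The quantum determinant `det_q(D) = ∂¹₁∂²₂ − q²∂¹₂∂²₁`. -/
def detD (q : ℂ) : DqPlus q := p11 q * p22 q - (q ^ 2) • (p12 q * p21 q)

/-- The matrix entry generators `a^i_j`, indexed by `Fin 2 × Fin 2`. -/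
def aM (q : ℂ) : Fin 2 → Fin 2 → DqPlus q :=
  ![![a11 q, a12 q], ![a21 q, a22 q]]

/-- The matrix entry generators `∂^i_j`, indexed by `Fin 2 × Fin 2`. -/
def pM (q : ℂ) : Fin 2 → Fin 2 → DqPlus q :=
  ![![p11 q, p12 q], ![p21 q, p22 q]]


/-- The relations, in an arbitrary algebra. -/
structure QSys {B : Type} [Ring B] [Algebra ℂ B] (q : ℂ)
    (a11 a12 a21 a22 p11 p12 p21 p22 : B) : Prop where
  a1 : a12 * a11 =
      a11 * a12 + (1 - q⁻¹ ^ 2) • (a12 * a22)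
  a2 : a22 * a11 =
      a11 * a22
  a3 : a21 * a11 =
      a11 * a21 - (1 - q⁻¹ ^ 2) • (a22 * a21)
  a4 : a22 * a12 =
      (q ^ 2) • (a12 * a22)
  a5 : a21 * a12 =
      a12 * a21 + (1 - q⁻¹ ^ 2) • (a11 * a22 - a22 * a22)
  a6 : a22 * a21 =
      (q⁻¹ ^ 2) • (a21 * a22)
  p1 : p12 * p11 =
      p11 * p12 + (1 - q⁻¹ ^ 2) • (p12 * p22)
  p2 : p22 * p11 =
      p11 * p22
  p3 : p21 * p11 =
      p11 * p21 - (1 - q⁻¹ ^ 2) • (p22 * p21)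
  p4 : p22 * p12 =
      (q ^ 2) • (p12 * p22)
  p5 : p21 * p12 =
      p12 * p21 + (1 - q⁻¹ ^ 2) • (p11 * p22 - p22 * p22)
  p6 : p22 * p21 =
      (q⁻¹ ^ 2) • (p21 * p22)
  c1 : p11 * a11 =
      -((1 - q⁻¹ ^ 2) • (p12 * a21)) + (q⁻¹ ^ 2) • (a11 * p11) + (q⁻¹ ^ 2 - q⁻¹ ^ 4) • (a12 * p21)
  c2 : p11 * a12 =
      (q⁻¹ ^ 2 - 1) • (p12 * a22) + (q⁻¹ ^ 2) • (a12 * p11)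
  c3 : p11 * a21 =
      (1 - q ^ 2) • (p21 * a11) - ((q - q⁻¹) ^ 2) • (p22 * a21) + a21 * p11 + (1 - q⁻¹ ^ 2) • (a22 * p21)
  c4 : p11 * a22 =
      (1 - q ^ 2) • (p21 * a12) - ((q - q⁻¹) ^ 2) • (p22 * a22) + a22 * p11
  c5 : p12 * a11 =
      a11 * p12 + (1 - q⁻¹ ^ 2) • (a12 * p22) + (q⁻¹ ^ 2 - 1) • (a12 * p11)
  c6 : p12 * a12 =
      (q⁻¹ ^ 2) • (a12 * p12)
  c7 : p12 * a21 =
      (q⁻¹ ^ 2 - 1) • (p22 * a11) + a21 * p12 + (q⁻¹ ^ 2 - 1) • (a22 * p11) + (1 - q⁻¹ ^ 2) • (a22 * p22)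
  c8 : p12 * a22 =
      (q⁻¹ ^ 2 - 1) • (p22 * a12) + (q⁻¹ ^ 2) • (a22 * p12)
  c9 : p21 * a11 =
      (q⁻¹ ^ 2) • (a11 * p21) - (1 - q⁻¹ ^ 2) • (p22 * a21)
  c10 : p21 * a12 =
      (q⁻¹ ^ 2 - 1) • (p22 * a22) + a12 * p21
  c11 : p21 * a21 =
      (q⁻¹ ^ 2) • (a21 * p21)
  c12 : p21 * a22 =
      a22 * p21
  c13 : p22 * a11 =
      a11 * p22 + (1 - q ^ 2) • (a12 * p21)
  c14 : p22 * a12 =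
      a12 * p22
  c15 : p22 * a21 =
      (q⁻¹ ^ 2) • (a21 * p22) + (q⁻¹ ^ 2 - 1) • (a22 * p21)
  c16 : p22 * a22 =
      (q⁻¹ ^ 2) • (a22 * p22)

theorem qsys (q : ℂ) : QSys q (a11 q) (a12 q) (a21 q) (a22 q) (p11 q) (p12 q) (p21 q) (p22 q) := by
  have e {x y : FQ} (h : QRel q x y) := RingQuot.mkAlgHom_rel ℂ h
  simp only [a11, a12, a21, a22, p11, p12, p21, p22]
  constructor
  all_goals
    simp only [← map_mul, ← map_add, ← map_sub, ← map_neg, ← map_smul]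
    exact e (by constructor)

theorem assoc_rule {B : Type} [Ring B] {x y r : B} (h : x * y = r) (z : B) :
    x * (y * z) = r * z := by rw [← mul_assoc, h]

section
set_option linter.unusedSimpArgs false
set_option linter.unnecessarySeqFocus false
variable {B : Type} [Ring B] [Algebra ℂ B] {q : ℂ} {a11 a12 a21 a22 p11 p12 p21 p22 : B}

set_option maxHeartbeats 4000000 in
theorem AA (hq : q ≠ 0) (h : QSys q a11 a12 a21 a22 p11 p12 p21 p22) :
    (a11 * a22 - (q ^ 2) • (a12 * a21)) * a11 = a11 * (a11 * a22 - (q ^ 2) • (a12 * a21)) ∧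
    (a11 * a22 - (q ^ 2) • (a12 * a21)) * a12 = a12 * (a11 * a22 - (q ^ 2) • (a12 * a21)) ∧
    (a11 * a22 - (q ^ 2) • (a12 * a21)) * a21 = a21 * (a11 * a22 - (q ^ 2) • (a12 * a21)) ∧
    (a11 * a22 - (q ^ 2) • (a12 * a21)) * a22 = a22 * (a11 * a22 - (q ^ 2) • (a12 * a21)) := by
  refine ⟨?_, ?_, ?_, ?_⟩
  all_goals
   simp only [mul_assoc, mul_add, add_mul, mul_sub, sub_mul, mul_neg, neg_mul, smul_mul_assoc,
    mul_smul_comm, h.a1, h.a2, h.a3, h.a4, h.a5, h.a6,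
    assoc_rule h.a1, assoc_rule h.a2, assoc_rule h.a3, assoc_rule h.a4, assoc_rule h.a5, assoc_rule h.a6]
   match_scalars <;> field_simp <;> ring

set_option maxHeartbeats 4000000 in
theorem DA (hq : q ≠ 0) (h : QSys q a11 a12 a21 a22 p11 p12 p21 p22) :
    (p11 * p22 - (q ^ 2) • (p12 * p21)) * a11 = (q⁻¹ ^ 2) • (a11 * (p11 * p22 - (q ^ 2) • (p12 * p21))) ∧
    (p11 * p22 - (q ^ 2) • (p12 * p21)) * a12 = (q⁻¹ ^ 2) • (a12 * (p11 * p22 - (q ^ 2) • (p12 * p21))) ∧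
    (p11 * p22 - (q ^ 2) • (p12 * p21)) * a21 = (q⁻¹ ^ 2) • (a21 * (p11 * p22 - (q ^ 2) • (p12 * p21))) ∧
    (p11 * p22 - (q ^ 2) • (p12 * p21)) * a22 = (q⁻¹ ^ 2) • (a22 * (p11 * p22 - (q ^ 2) • (p12 * p21))) := by
  refine ⟨?_, ?_, ?_, ?_⟩
  all_goals
   simp only [mul_assoc, mul_add, add_mul, mul_sub, sub_mul, mul_neg, neg_mul, smul_mul_assoc,
    mul_smul_comm, h.c1, h.c2, h.c3, h.c4, h.c5, h.c6, h.c7, h.c8, h.c9, h.c10, h.c11, h.c12, h.c13, h.c14, h.c15, h.c16, h.p1, h.p2, h.p3, h.p4, h.p5, h.p6,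
    assoc_rule h.c1, assoc_rule h.c2, assoc_rule h.c3, assoc_rule h.c4, assoc_rule h.c5, assoc_rule h.c6, assoc_rule h.c7, assoc_rule h.c8, assoc_rule h.c9, assoc_rule h.c10, assoc_rule h.c11, assoc_rule h.c12, assoc_rule h.c13, assoc_rule h.c14, assoc_rule h.c15, assoc_rule h.c16, assoc_rule h.p1, assoc_rule h.p2, assoc_rule h.p3, assoc_rule h.p4, assoc_rule h.p5, assoc_rule h.p6]
   match_scalars <;> field_simp <;> ring

set_option maxHeartbeats 4000000 in
theorem PA (hq : q ≠ 0) (h : QSys q a11 a12 a21 a22 p11 p12 p21 p22) :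
    p11 * (a11 * a22 - (q ^ 2) • (a12 * a21)) = (q⁻¹ ^ 2) • ((a11 * a22 - (q ^ 2) • (a12 * a21)) * p11) ∧
    p12 * (a11 * a22 - (q ^ 2) • (a12 * a21)) = (q⁻¹ ^ 2) • ((a11 * a22 - (q ^ 2) • (a12 * a21)) * p12) ∧
    p21 * (a11 * a22 - (q ^ 2) • (a12 * a21)) = (q⁻¹ ^ 2) • ((a11 * a22 - (q ^ 2) • (a12 * a21)) * p21) ∧
    p22 * (a11 * a22 - (q ^ 2) • (a12 * a21)) = (q⁻¹ ^ 2) • ((a11 * a22 - (q ^ 2) • (a12 * a21)) * p22) := by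
  refine ⟨?_, ?_, ?_, ?_⟩
  all_goals
   simp only [mul_assoc, mul_add, add_mul, mul_sub, sub_mul, mul_neg, neg_mul, smul_mul_assoc,
    mul_smul_comm, h.c1, h.c2, h.c3, h.c4, h.c5, h.c6, h.c7, h.c8, h.c9, h.c10, h.c11, h.c12, h.c13, h.c14, h.c15, h.c16, h.a1, h.a2, h.a3, h.a4, h.a5, h.a6,
    assoc_rule h.c1, assoc_rule h.c2, assoc_rule h.c3, assoc_rule h.c4, assoc_rule h.c5, assoc_rule h.c6, assoc_rule h.c7, assoc_rule h.c8, assoc_rule h.c9, assoc_rule h.c10, assoc_rule h.c11, assoc_rule h.c12, assoc_rule h.c13, assoc_rule h.c14, assoc_rule h.c15, assoc_rule h.c16, assoc_rule h.a1, assoc_rule h.a2, assoc_rule h.a3, assoc_rule h.a4, assoc_rule h.a5, assoc_rule h.a6]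
   match_scalars <;> field_simp <;> ring

set_option maxHeartbeats 4000000 in
theorem PD (hq : q ≠ 0) (h : QSys q a11 a12 a21 a22 p11 p12 p21 p22) :
    p11 * (p11 * p22 - (q ^ 2) • (p12 * p21)) = (p11 * p22 - (q ^ 2) • (p12 * p21)) * p11 ∧
    p12 * (p11 * p22 - (q ^ 2) • (p12 * p21)) = (p11 * p22 - (q ^ 2) • (p12 * p21)) * p12 ∧
    p21 * (p11 * p22 - (q ^ 2) • (p12 * p21)) = (p11 * p22 - (q ^ 2) • (p12 * p21)) * p21 ∧
    p22 * (p11 * p22 - (q ^ 2) • (p12 * p21)) = (p11 * p22 - (q ^ 2) • (p12 * p21)) * p22 := by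
  refine ⟨?_, ?_, ?_, ?_⟩
  all_goals
   simp only [mul_assoc, mul_add, add_mul, mul_sub, sub_mul, mul_neg, neg_mul, smul_mul_assoc,
    mul_smul_comm, h.p1, h.p2, h.p3, h.p4, h.p5, h.p6,
    assoc_rule h.p1, assoc_rule h.p2, assoc_rule h.p3, assoc_rule h.p4, assoc_rule h.p5, assoc_rule h.p6]
   match_scalars <;> field_simp <;> ring

end

/-- `s` is a normal element. -/
def NormalElt {B : Type} [Ring B] (s : B) : Prop :=
  (∀ x, ∃ y, s * x = y * s) ∧ (∀ x, ∃ y, x * s = s * y)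

theorem NormalElt.mul {B : Type} [Ring B] {s t : B} (hs : NormalElt s) (ht : NormalElt t) :
    NormalElt (s * t) := by
  refine ⟨fun x => ?_, fun x => ?_⟩
  · obtain ⟨y, hy⟩ := ht.1 x
    obtain ⟨z, hz⟩ := hs.1 y
    exact ⟨z, by rw [mul_assoc, hy, ← mul_assoc, hz, mul_assoc]⟩
  · obtain ⟨y, hy⟩ := hs.2 x
    obtain ⟨z, hz⟩ := ht.2 y
    exact ⟨z, by rw [← mul_assoc, hy, mul_assoc, hz, mul_assoc]⟩

theorem NormalElt.pow {B : Type} [Ring B] {s : B} (hs : NormalElt s) (n : ℕ) :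
    NormalElt (s ^ n) := by
  induction n with
  | zero => exact ⟨fun x => ⟨x, by simp⟩, fun x => ⟨x, by simp⟩⟩
  | succ k ih => rw [pow_succ]; exact ih.mul hs

theorem normal_of_gens {q : ℂ} {s : DqPlus q}
    (h : ∀ g : QGen, ∃ c : ℂ, c ≠ 0 ∧
      s * RingQuot.mkAlgHom ℂ (QRel q) (gQ g) = c • (RingQuot.mkAlgHom ℂ (QRel q) (gQ g) * s)) :
    NormalElt s := by
  refine ⟨fun x => ?_, fun x => ?_⟩
  all_goals
    obtain ⟨x, rfl⟩ := RingQuot.mkAlgHom_surjective ℂ (QRel q) x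
    induction x using FreeAlgebra.induction with
    | grade0 r =>
      refine ⟨algebraMap ℂ _ r, ?_⟩
      rw [AlgHom.commutes]
      first | exact (Algebra.commutes r s).symm | exact Algebra.commutes r s
    | grade1 g =>
      obtain ⟨c, hc, e⟩ := h g
      first
      | exact ⟨c • RingQuot.mkAlgHom ℂ (QRel q) (gQ g), by rw [smul_mul_assoc]; exact e⟩
      | exact ⟨c⁻¹ • RingQuot.mkAlgHom ℂ (QRel q) (gQ g), by
          rw [mul_smul_comm, e, smul_smul, inv_mul_cancel₀ hc, one_smul]; rfl⟩
    | mul x y hx hy =>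
      obtain ⟨u, hu⟩ := hx
      obtain ⟨v, hv⟩ := hy
      refine ⟨u * v, ?_⟩
      rw [map_mul]
      first
      | rw [← mul_assoc, hu, mul_assoc, hv, mul_assoc]
      | rw [mul_assoc, hv, ← mul_assoc, hu, mul_assoc]
    | add x y hx hy =>
      obtain ⟨u, hu⟩ := hx
      obtain ⟨v, hv⟩ := hy
      exact ⟨u + v, by rw [map_add, mul_add, add_mul, hu, hv]⟩

theorem smul_flip {B : Type} [Ring B] [Algebra ℂ B] {q : ℂ} (hq : q ≠ 0) {x y : B}
    (h : x = (q⁻¹ ^ 2) • y) : y = (q ^ 2) • x := by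
  rw [h, smul_smul, ← mul_pow, mul_inv_cancel₀ hq, one_pow, one_smul]

theorem normal_detA {q : ℂ} (hq : q ≠ 0) : NormalElt (detA q) := by
  apply normal_of_gens
  intro g
  cases g
  · exact ⟨1, one_ne_zero, by rw [one_smul]; exact (AA hq (qsys q)).1⟩
  · exact ⟨1, one_ne_zero, by rw [one_smul]; exact (AA hq (qsys q)).2.1⟩
  · exact ⟨1, one_ne_zero, by rw [one_smul]; exact (AA hq (qsys q)).2.2.1⟩
  · exact ⟨1, one_ne_zero, by rw [one_smul]; exact (AA hq (qsys q)).2.2.2⟩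
  · exact ⟨q ^ 2, pow_ne_zero 2 hq, smul_flip hq ((PA hq (qsys q)).1)⟩
  · exact ⟨q ^ 2, pow_ne_zero 2 hq, smul_flip hq ((PA hq (qsys q)).2.1)⟩
  · exact ⟨q ^ 2, pow_ne_zero 2 hq, smul_flip hq ((PA hq (qsys q)).2.2.1)⟩
  · exact ⟨q ^ 2, pow_ne_zero 2 hq, smul_flip hq ((PA hq (qsys q)).2.2.2)⟩

theorem normal_detD {q : ℂ} (hq : q ≠ 0) : NormalElt (detD q) := by
  apply normal_of_gens
  intro g
  cases g
  · exact ⟨q⁻¹ ^ 2, pow_ne_zero 2 (inv_ne_zero hq), (DA hq (qsys q)).1⟩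
  · exact ⟨q⁻¹ ^ 2, pow_ne_zero 2 (inv_ne_zero hq), (DA hq (qsys q)).2.1⟩
  · exact ⟨q⁻¹ ^ 2, pow_ne_zero 2 (inv_ne_zero hq), (DA hq (qsys q)).2.2.1⟩
  · exact ⟨q⁻¹ ^ 2, pow_ne_zero 2 (inv_ne_zero hq), (DA hq (qsys q)).2.2.2⟩
  · exact ⟨1, one_ne_zero, by rw [one_smul]; exact ((PD hq (qsys q)).1).symm⟩
  · exact ⟨1, one_ne_zero, by rw [one_smul]; exact ((PD hq (qsys q)).2.1).symm⟩
  · exact ⟨1, one_ne_zero, by rw [one_smul]; exact ((PD hq (qsys q)).2.2.1).symm⟩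
  · exact ⟨1, one_ne_zero, by rw [one_smul]; exact ((PD hq (qsys q)).2.2.2).symm⟩

/-- In `𝒟q⁺(GL₂)`, for all `i, j ∈ {1,2}`:
`det_q(A)·a^i_j = a^i_j·det_q(A)`; `det_q(D)·a^i_j = q⁻²·a^i_j·det_q(D)`;
`∂^i_j·det_q(A) = q⁻²·det_q(A)·∂^i_j`; `∂^i_j·det_q(D) = det_q(D)·∂^i_j`.
Consequently, the multiplicative set `{det_q(A)^m det_q(D)^n : m, n ∈ ℕ₀}` satisfies
the two-sided Ore condition in `𝒟q⁺(GL₂)`. -/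
theorem stmt12 (q : ℂ) (hq : q ≠ 0) :
    (∀ i j : Fin 2,
      detA q * aM q i j = aM q i j * detA q ∧
      detD q * aM q i j = (q⁻¹ ^ 2) • (aM q i j * detD q) ∧
      pM q i j * detA q = (q⁻¹ ^ 2) • (detA q * pM q i j) ∧
      pM q i j * detD q = detD q * pM q i j) ∧
    (∀ x : DqPlus q, ∀ m n : ℕ,
      (∃ x' : DqPlus q, ∃ m' n' : ℕ,
        (detA q ^ m' * detD q ^ n') * x = x' * (detA q ^ m * detD q ^ n)) ∧
      (∃ x'' : DqPlus q, ∃ m'' n'' : ℕ,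
        x * (detA q ^ m'' * detD q ^ n'') = (detA q ^ m * detD q ^ n) * x'')) := by
  refine ⟨fun i j => ?_, fun x m n => ?_⟩
  · fin_cases i <;> fin_cases j
    · exact ⟨(AA hq (qsys q)).1, (DA hq (qsys q)).1, (PA hq (qsys q)).1, (PD hq (qsys q)).1⟩
    · exact ⟨(AA hq (qsys q)).2.1, (DA hq (qsys q)).2.1, (PA hq (qsys q)).2.1, (PD hq (qsys q)).2.1⟩
    · exact ⟨(AA hq (qsys q)).2.2.1, (DA hq (qsys q)).2.2.1, (PA hq (qsys q)).2.2.1, (PD hq (qsys q)).2.2.1⟩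
    · exact ⟨(AA hq (qsys q)).2.2.2, (DA hq (qsys q)).2.2.2, (PA hq (qsys q)).2.2.2, (PD hq (qsys q)).2.2.2⟩
  · have hN := ((normal_detA hq).pow m).mul ((normal_detD hq).pow n)
    obtain ⟨y, hy⟩ := hN.1 x
    obtain ⟨z, hz⟩ := hN.2 x
    exact ⟨⟨y, m, n, hy⟩, ⟨z, m, n, hz⟩⟩
end
end

section
/- The ordered monomials a^{i₁}_{j₁}a^{i₂}_{j₂}⋯a^{i_m}_{j_m}∂^{k₁}_{l₁}∂^{k₂}_{l₂}⋯∂^{k_n}_{l_n}, with m, n ∈ ℕ₀ and index pairs satisfying, for every p, either i_p < i_{p+1} or (i_p = i_{p+1} and j_p ≤ j_{p+1}), and likewise either k_p < k_{p+1} or (k_p = k_{p+1} and l_p ≤ l_{p+1}), form a ℂ-vector-space basis of 𝒟q⁺(GL₂). -/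
noncomputable section

/-- The ordered PBW monomials of `𝒟q⁺(GL₂)`: since the admissible index sequences
are exactly the weakly increasing ones in the lexicographic order
`(1,1) < (1,2) < (2,1) < (2,2)`, they correspond bijectively to exponent vectors
`(e₁,…,e₄,f₁,…,f₄) ∈ ℕ₀⁸` via
`a¹₁^{e₁}a¹₂^{e₂}a²₁^{e₃}a²₂^{e₄}∂¹₁^{f₁}∂¹₂^{f₂}∂²₁^{f₃}∂²₂^{f₄}`. -/
def pbwDq (q : ℂ) : (ℕ × ℕ × ℕ × ℕ) × (ℕ × ℕ × ℕ × ℕ) → DqPlus q :=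
  fun x =>
    a11 q ^ x.1.1 * a12 q ^ x.1.2.1 * a21 q ^ x.1.2.2.1 * a22 q ^ x.1.2.2.2 *
    (p11 q ^ x.2.1 * p12 q ^ x.2.2.1 * p21 q ^ x.2.2.2.1 * p22 q ^ x.2.2.2.2)

namespace DQ
def rhs (s t : ℂ) : QGen → QGen → List (ℂ × QGen × QGen)
  | .a12, .a11 => [(1, .a11, .a12), (1 - t, .a12, .a22)]
  | .a22, .a11 => [(1, .a11, .a22)]
  | .a21, .a11 => [(1, .a11, .a21), (-t + t*t, .a21, .a22)]
  | .a22, .a12 => [(s, .a12, .a22)]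
  | .a21, .a12 => [(1 - t, .a11, .a22), (1, .a12, .a21), (-1 + t, .a22, .a22)]
  | .a22, .a21 => [(t, .a21, .a22)]
  | .p12, .p11 => [(1, .p11, .p12), (1 - t, .p12, .p22)]
  | .p22, .p11 => [(1, .p11, .p22)]
  | .p21, .p11 => [(1, .p11, .p21), (-t + t*t, .p21, .p22)]
  | .p22, .p12 => [(s, .p12, .p22)]
  | .p21, .p12 => [(1 - t, .p11, .p22), (1, .p12, .p21), (-1 + t, .p22, .p22)]
  | .p22, .p21 => [(t, .p21, .p22)]
  | .p11, .a11 => [(t, .a11, .p11), (1 - 2*t + t*t, .a11, .p22), (-s + 3 - 2*t, .a12, .p21), (-1 + t, .a21, .p12), (1 - 2*t + t*t, .a22, .p11), (-1 + 2*t - t*t, .a22, .p22)]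
  | .p11, .a12 => [(t, .a12, .p11), (1 - 2*t + t*t, .a12, .p22), (-t + t*t, .a22, .p12)]
  | .p11, .a21 => [(-1 + t, .a11, .p21), (1, .a21, .p11), (1 - t, .a22, .p21)]
  | .p11, .a22 => [(-s + 1, .a12, .p21), (1, .a22, .p11)]
  | .p12, .a11 => [(1, .a11, .p12), (-1 + t, .a12, .p11), (1 - t, .a12, .p22)]
  | .p12, .a12 => [(t, .a12, .p12)]
  | .p12, .a21 => [(-1 + t, .a11, .p22), (s - 2 + t, .a12, .p21), (1, .a21, .p12), (-1 + t, .a22, .p11), (1 - t, .a22, .p22)]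
  | .p12, .a22 => [(-1 + t, .a12, .p22), (t, .a22, .p12)]
  | .p21, .a11 => [(t, .a11, .p21), (-t + t*t, .a21, .p22), (1 - 2*t + t*t, .a22, .p21)]
  | .p21, .a12 => [(1, .a12, .p21), (-t + t*t, .a22, .p22)]
  | .p21, .a21 => [(t, .a21, .p21)]
  | .p21, .a22 => [(1, .a22, .p21)]
  | .p22, .a11 => [(1, .a11, .p22), (-s + 1, .a12, .p21)]
  | .p22, .a12 => [(1, .a12, .p22)]
  | .p22, .a21 => [(t, .a21, .p22), (-1 + t, .a22, .p21)]
  | .p22, .a22 => [(t, .a22, .p22)]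
  | _, _ => []

def dg : QGen → ℕ
  | .a11 => 7 | .a12 => 6 | .a21 => 5 | .a22 => 4
  | .p11 => 3 | .p12 => 2 | .p21 => 1 | .p22 => 0

def ap {V : Type*} [AddCommGroup V] [Module ℂ V] (s t : ℂ) (x y : QGen) (f : QGen → QGen → V) : V :=
  ((rhs s t x y).map fun e => e.1 • f e.2.1 e.2.2).sum

set_option maxHeartbeats 4000000 in
theorem loc {V : Type*} [AddCommGroup V] [Module ℂ V] (s t : ℂ) (ht : t ≠ 0) (hs : s = t⁻¹)
    (F : QGen → QGen → QGen → V) (z y x : QGen)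
    (h1 : ∀ a b c, dg a + 8 * dg b + 64 * dg c < dg x + 8 * dg y + 64 * dg z → dg a < dg b →
      F a b c = ap s t a b fun u v => F u v c)
    (h2 : ∀ a b c, dg a + 8 * dg b + 64 * dg c < dg x + 8 * dg y + 64 * dg z → dg b < dg c →
      F a b c = ap s t b c fun u v => F a u v)
    (hxy : dg x < dg y) (hyz : dg y < dg z) :
    ap s t x y (fun u v => F u v z) = ap s t y z (fun u v => F x u v) := by
  cases z <;> cases y <;> (first | (exfalso; revert hyz; decide) | skip) <;>
  cases x <;> (first | (exfalso; revert hxy; decide) | skip)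
  all_goals
    subst hs
    simp (discharger := decide) only [h1, h2, ap, rhs, smul_add, smul_smul, List.map_cons,
      List.map_nil, List.sum_cons, List.sum_nil, add_zero, one_smul] <;>
    (clear h1 h2
     match_scalars <;> first | ring1 | (field_simp; done) | (field_simp; ring1))

def val : List QGen → ℕ
  | [] => 0
  | x :: w => dg x + 8 * val w

theorem val_append (u v : List QGen) : val (u ++ v) = val u + 8 ^ u.length * val v := by
  induction u with
  | nil => simp [val]
  | cons x u ih => simp only [List.cons_append, val, ih, List.length_cons, pow_succ]; ring

theorem rhs_lt (s t : ℂ) (x y : QGen) : ∀ e ∈ rhs s t x y,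
    dg e.2.1 + 8 * dg e.2.2 < dg x + 8 * dg y := by
  cases x <;> cases y <;> simp [rhs, dg]

theorem val_lt (u v : List QGen) (a b x y : QGen) (h : dg a + 8 * dg b < dg x + 8 * dg y) :
    val (u ++ a :: b :: v) < val (u ++ x :: y :: v) := by
  rw [val_append, val_append]
  simp only [val]
  have : 0 < 8 ^ u.length := by positivity
  gcongr ?_ + ?_ * ?_
  omega

open Classical in
def N (s t : ℂ) (w : List QGen) : List QGen →₀ ℂ :=
  if h : ∃ p : List QGen × QGen × QGen × List QGen,
      w = p.1 ++ p.2.1 :: p.2.2.1 :: p.2.2.2 ∧ dg p.2.1 < dg p.2.2.1 then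
    ((rhs s t h.choose.2.1 h.choose.2.2.1).attach.map fun e =>
      e.1.1 • N s t (h.choose.1 ++ e.1.2.1 :: e.1.2.2 :: h.choose.2.2.2)).sum
  else Finsupp.single w 1
termination_by val w
decreasing_by
  conv_rhs => rw [h.choose_spec.1]
  exact val_lt _ _ _ _ _ _ (rhs_lt s t _ _ _ e.2)

theorem N_bad (s t : ℂ) (w : List QGen) (h : ∃ p : List QGen × QGen × QGen × List QGen,
      w = p.1 ++ p.2.1 :: p.2.2.1 :: p.2.2.2 ∧ dg p.2.1 < dg p.2.2.1) :
    ∃ u x y v, w = u ++ x :: y :: v ∧ dg x < dg y ∧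
      N s t w = ap s t x y fun a b => N s t (u ++ a :: b :: v) := by
  refine ⟨h.choose.1, h.choose.2.1, h.choose.2.2.1, h.choose.2.2.2, h.choose_spec.1,
    h.choose_spec.2, ?_⟩
  rw [N, dif_pos h, ap]
  congr 1
  exact List.attach_map_val (l := rhs s t h.choose.2.1 h.choose.2.2.1) (f := fun e =>
      e.1 • N s t (h.choose.1 ++ e.2.1 :: e.2.2 :: h.choose.2.2.2))

theorem N_good (s t : ℂ) (w : List QGen) (h : ¬ ∃ p : List QGen × QGen × QGen × List QGen,
      w = p.1 ++ p.2.1 :: p.2.2.1 :: p.2.2.2 ∧ dg p.2.1 < dg p.2.2.1) :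
    N s t w = Finsupp.single w 1 := by
  rw [N, dif_neg h]

section
variable {V : Type*} [AddCommGroup V] [Module ℂ V]

theorem ap_congr (s t : ℂ) (x y : QGen) (f g : QGen → QGen → V)
    (h : ∀ a b, dg a + 8 * dg b < dg x + 8 * dg y → f a b = g a b) :
    ap s t x y f = ap s t x y g := by
  unfold ap
  congr 1
  refine List.map_congr_left fun e he => ?_
  rw [h _ _ (rhs_lt s t x y e he)]

theorem ap_comm (s t : ℂ) (x y x' y' : QGen) (g : QGen → QGen → QGen → QGen → V) :
    ap s t x y (fun a b => ap s t x' y' fun c d => g a b c d) =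
    ap s t x' y' (fun c d => ap s t x y fun a b => g a b c d) := by
  unfold ap
  generalize rhs s t x y = l
  generalize rhs s t x' y' = l'
  induction l with
  | nil => induction l' with
    | nil => rfl
    | cons e l' ih => simpa using ih
  | cons e l ih =>
    simp only [List.map_cons, List.sum_cons, ih, smul_add]
    rw [List.sum_map_add, List.smul_sum, List.map_map]
    congr 3
    ext e'
    simp only [Function.comp, smul_smul, mul_comm]

theorem ap_map {W : Type*} [AddCommGroup W] [Module ℂ W] (L : V →ₗ[ℂ] W) (s t : ℂ) (x y : QGen)
    (f : QGen → QGen → V) : L (ap s t x y f) = ap s t x y fun a b => L (f a b) := by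
  unfold ap
  rw [map_list_sum, List.map_map]
  congr 2
  ext e
  simp
end

theorem two (s t : ℂ) (ht : t ≠ 0) (hs : s = t⁻¹) (w u v m v' : List QGen) (x y x' y' : QGen)
    (hw : w = u ++ x :: y :: v)
    (IH : ∀ w', val w' < val w → ∀ u x y v, w' = u ++ x :: y :: v → dg x < dg y →
      N s t w' = ap s t x y fun a b => N s t (u ++ a :: b :: v))
    (he : x :: y :: v = m ++ x' :: y' :: v') (hx : dg x < dg y) (hx' : dg x' < dg y') :
    (ap s t x y fun a b => N s t (u ++ a :: b :: v)) =
    ap s t x' y' fun a b => N s t ((u ++ m) ++ a :: b :: v') := by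
  match m with
  | [] =>
    simp only [List.nil_append, List.cons.injEq] at he
    obtain ⟨rfl, rfl, rfl⟩ := he
    simp
  | [c] =>
    simp only [List.cons_append, List.nil_append, List.cons.injEq] at he
    obtain ⟨rfl, rfl, rfl⟩ := he
    have hlt : ∀ a b c, dg a + 8 * dg b + 64 * dg c < dg x + 8 * dg y + 64 * dg y' →
        val (u ++ a :: b :: c :: v') < val w := by
      intro a b c h
      rw [hw, val_append, val_append]
      simp only [val]
      have : 0 < 8 ^ u.length := by positivity
      gcongr ?_ + ?_ * ?_
      omega
    have := loc s t ht hs (fun a b c => N s t (u ++ a :: b :: c :: v')) y' y x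
      (fun a b c h hab => IH _ (hlt a b c h) u a b (c :: v') rfl hab)
      (fun a b c h hbc => by
        have := IH _ (hlt a b c h) (u ++ [a]) b c v' (by simp) hbc
        simpa using this) hx hx'
    simpa using this
  | c :: d :: m =>
    simp only [List.cons_append, List.cons.injEq] at he
    obtain ⟨rfl, rfl, rfl⟩ := he
    have e1 : ∀ a b, dg a + 8 * dg b < dg x + 8 * dg y →
        N s t (u ++ a :: b :: (m ++ x' :: y' :: v')) =
        ap s t x' y' fun c d => N s t (u ++ a :: b :: (m ++ c :: d :: v')) := by
      intro a b h
      have := IH (u ++ a :: b :: (m ++ x' :: y' :: v')) (by rw [hw]; exact val_lt _ _ _ _ _ _ h)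
        (u ++ a :: b :: m) x' y' v' (by simp) hx'
      simpa using this
    have e2 : ∀ a b, dg a + 8 * dg b < dg x' + 8 * dg y' →
        N s t (u ++ x :: y :: m ++ a :: b :: v') =
        ap s t x y fun c d => N s t (u ++ c :: d :: (m ++ a :: b :: v')) := by
      intro a b h
      refine IH (u ++ x :: y :: m ++ a :: b :: v') ?_ u x y (m ++ a :: b :: v') (by simp) hx
      have := val_lt (u ++ x :: y :: m) v' a b x' y' h
      rw [hw]
      simpa using this
    rw [ap_congr s t x y _ _ e1, ap_congr s t x' y' _ _ e2, ap_comm]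

theorem key (s t : ℂ) (ht : t ≠ 0) (hs : s = t⁻¹) (w : List QGen) :
    ∀ u x y v, w = u ++ x :: y :: v → dg x < dg y →
      N s t w = ap s t x y fun a b => N s t (u ++ a :: b :: v) := by
  induction hn : val w using Nat.strong_induction_on generalizing w with
  | _ n ih =>
  subst hn
  have IH : ∀ w', val w' < val w → ∀ u x y v, w' = u ++ x :: y :: v → dg x < dg y →
      N s t w' = ap s t x y fun a b => N s t (u ++ a :: b :: v) :=
    fun w' h => ih _ h w' rfl
  intro u x y v hw hx
  obtain ⟨u', x', y', v', hw', hx', hN⟩ := N_bad s t w ⟨(u, x, y, v), hw, hx⟩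
  rw [hN]
  have he := hw.symm.trans hw'
  rcases List.append_eq_append_iff.1 he with ⟨m, h1, h2⟩ | ⟨m, h1, h2⟩
  · subst h1
    exact (two s t ht hs w u v m v' x y x' y' hw IH h2 hx hx').symm
  · subst h1
    exact two s t ht hs w u' v' m v x' y' x y hw' IH h2 hx' hx

theorem dg_inj : Function.Injective dg := by
  intro x y h
  cases x <;> cases y <;> first | rfl | (exfalso; revert h; decide)

def nf (e : (ℕ × ℕ × ℕ × ℕ) × (ℕ × ℕ × ℕ × ℕ)) : List QGen :=
  List.replicate e.1.1 .a11 ++ (List.replicate e.1.2.1 .a12 ++ (List.replicate e.1.2.2.1 .a21 ++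
  (List.replicate e.1.2.2.2 .a22 ++ (List.replicate e.2.1 .p11 ++ (List.replicate e.2.2.1 .p12 ++
  (List.replicate e.2.2.2.1 .p21 ++ List.replicate e.2.2.2.2 .p22))))))

theorem nf_sorted (e) : (nf e).Pairwise (fun x y => dg y ≤ dg x) := by
  simp only [nf, List.pairwise_append, List.pairwise_replicate, List.mem_append,
    List.mem_replicate]
  simp (config := { contextual := true }) [or_imp, dg]

theorem not_bad (w : List QGen) (h : w.Pairwise (fun x y => dg y ≤ dg x)) :
    ¬ ∃ p : List QGen × QGen × QGen × List QGen,
      w = p.1 ++ p.2.1 :: p.2.2.1 :: p.2.2.2 ∧ dg p.2.1 < dg p.2.2.1 := by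
  rintro ⟨⟨u, x, y, v⟩, rfl, hp⟩
  have := (List.pairwise_append.1 h).2.1
  have := (List.pairwise_cons.1 this).1 y (by simp)
  simp only at hp this
  omega

theorem sorted_of (w : List QGen) (h : ¬ ∃ p : List QGen × QGen × QGen × List QGen,
      w = p.1 ++ p.2.1 :: p.2.2.1 :: p.2.2.2 ∧ dg p.2.1 < dg p.2.2.1) :
    w.Pairwise (fun x y => dg y ≤ dg x) := by
  have : IsTrans QGen (fun x y => dg y ≤ dg x) := ⟨fun a b c h1 h2 => le_trans h2 h1⟩
  rw [← List.isChain_iff_pairwise]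
  induction w with
  | nil => simp
  | cons x w ih =>
    have := ih (by
      rintro ⟨⟨u, a, b, v⟩, rfl, hp⟩
      exact h ⟨(x :: u, a, b, v), rfl, hp⟩)
    cases w with
    | nil => simp
    | cons y w =>
      refine List.isChain_cons_cons.2 ⟨?_, this⟩
      by_contra hc
      exact h ⟨([], x, y, w), rfl, not_le.1 hc⟩

open Classical in
def cnt (w : List QGen) : (ℕ × ℕ × ℕ × ℕ) × (ℕ × ℕ × ℕ × ℕ) :=
  ((w.count .a11, w.count .a12, w.count .a21, w.count .a22),
   (w.count .p11, w.count .p12, w.count .p21, w.count .p22))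

theorem cnt_nf (e) : cnt (nf e) = e := by
  simp [cnt, nf, List.count_replicate]

theorem nf_cnt (w : List QGen) (h : w.Pairwise (fun x y => dg y ≤ dg x)) : nf (cnt w) = w := by
  classical
  refine List.Perm.eq_of_pairwise (le := fun x y => dg y ≤ dg x) ?_ (nf_sorted _) h ?_
  · intro a b _ _ h1 h2
    exact dg_inj (le_antisymm h2 h1)
  · rw [List.perm_iff_count]
    intro a
    cases a <;> simp [cnt, nf, List.count_replicate]

def word (w : List QGen) : FQ := (w.map gQ).prod

def Nhat (s t : ℂ) : FQ →ₗ[ℂ] (List QGen →₀ ℂ) :=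
  (FreeAlgebra.basisFreeMonoid ℂ QGen).constr ℂ fun w => N s t w.toList

theorem basis_word (w : FreeMonoid QGen) :
    FreeAlgebra.basisFreeMonoid ℂ QGen w = word w.toList := by
  simp only [FreeAlgebra.basisFreeMonoid, FreeAlgebra.equivMonoidAlgebraFreeMonoid, word, gQ]
  simp [MonoidAlgebra.coeffLinearEquiv]
  rw [FreeMonoid.lift_apply]

theorem Nhat_word (s t : ℂ) (w : List QGen) : Nhat s t (word w) = N s t w := by
  have := (FreeAlgebra.basisFreeMonoid ℂ QGen).constr_basis ℂ (fun w => N s t w.toList)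
    (FreeMonoid.ofList w)
  rw [basis_word] at this
  simpa [Nhat] using this

theorem word_span : Submodule.span ℂ (Set.range word) = ⊤ := by
  rw [← (FreeAlgebra.basisFreeMonoid ℂ QGen).span_eq]
  congr 1
  ext x
  constructor
  · rintro ⟨w, rfl⟩; exact ⟨FreeMonoid.ofList w, by rw [basis_word]; simp⟩
  · rintro ⟨w, rfl⟩; exact ⟨w.toList, by rw [basis_word]⟩

theorem word_append (u v) : word (u ++ v) = word u * word v := by simp [word]

section
variable {V : Type*} [AddCommGroup V] [Module ℂ V]

theorem rel_of_ap (q : ℂ) (hq : q ≠ 0) (L : FQ →ₗ[ℂ] V)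
    (h : ∀ x y, dg x < dg y → L (gQ x * gQ y) =
      ap (q ^ 2) (q⁻¹ ^ 2) x y fun a b => L (gQ a * gQ b))
    (a b : FQ) (hr : QRel q a b) : L a = L b := by
  cases hr <;>
  (try simp only [map_add, map_sub, map_neg, map_smul]) <;>
  simp (discharger := decide) only [h, ap, rhs, smul_add, smul_sub, smul_smul, List.map_cons,
      List.map_nil, List.sum_cons, List.sum_nil, add_zero, one_smul] <;>
  (clear h
   match_scalars <;> first | ring1 | (field_simp; done) | (field_simp; ring1))

set_option maxHeartbeats 1000000 in
theorem ap_of_rel (q : ℂ) (hq : q ≠ 0) (L : FQ →ₗ[ℂ] V)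
    (h : ∀ a b, QRel q a b → L a = L b) (x y : QGen) (hxy : dg x < dg y) :
    L (gQ x * gQ y) = ap (q ^ 2) (q⁻¹ ^ 2) x y fun a b => L (gQ a * gQ b) := by
  have a1 := h _ _ .a1
  have a2 := h _ _ .a2
  have a3 := h _ _ .a3
  have a4 := h _ _ .a4
  have a5 := h _ _ .a5
  have a6 := h _ _ .a6
  have p1 := h _ _ .p1
  have p2 := h _ _ .p2
  have p3 := h _ _ .p3
  have p4 := h _ _ .p4
  have p5 := h _ _ .p5
  have p6 := h _ _ .p6
  have c1 := h _ _ .c1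
  have c2 := h _ _ .c2
  have c3 := h _ _ .c3
  have c4 := h _ _ .c4
  have c5 := h _ _ .c5
  have c6 := h _ _ .c6
  have c7 := h _ _ .c7
  have c8 := h _ _ .c8
  have c9 := h _ _ .c9
  have c10 := h _ _ .c10
  have c11 := h _ _ .c11
  have c12 := h _ _ .c12
  have c13 := h _ _ .c13
  have c14 := h _ _ .c14
  have c15 := h _ _ .c15
  have c16 := h _ _ .c16
  clear h
  simp only [map_add, map_sub, map_neg, map_smul] at *
  cases x <;> cases y <;> (first | (exfalso; revert hxy; decide) | skip) <;> clear hxy <;>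
  simp only [a1, a2, a3, a4, a5, a6, p1, p2, p3, p4, p5, p6, c1, c2, c3, c4, c5, c6, c7, c8,
    c9, c10, c11, c12, c13, c14, c15, c16, ap, rhs, smul_add, smul_sub, smul_smul, List.map_cons,
      List.map_nil, List.sum_cons, List.sum_nil, add_zero, one_smul] <;>
  (clear a1 a2 a3 a4 a5 a6 p1 p2 p3 p4 p5 p6 c1 c2 c3 c4 c5 c6 c7 c8 c9 c10 c11 c12 c13 c14 c15 c16
   match_scalars <;> first | ring1 | (field_simp; done) | (field_simp; ring1))
end

theorem Nhat_rel (q : ℂ) (hq : q ≠ 0) (a b : FQ) (h : QRel q a b) (p r : FQ) :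
    Nhat (q ^ 2) (q⁻¹ ^ 2) (p * a * r) = Nhat (q ^ 2) (q⁻¹ ^ 2) (p * b * r) := by
  have hp : p ∈ Submodule.span ℂ (Set.range word) := by rw [word_span]; trivial
  have hr : r ∈ Submodule.span ℂ (Set.range word) := by rw [word_span]; trivial
  induction hp using Submodule.span_induction with
  | zero => simp
  | add x y _ _ hx hy => simp only [add_mul, map_add, hx, hy]
  | smul c x _ hx => simp only [smul_mul_assoc, map_smul, hx]
  | mem x hx =>
  obtain ⟨u, rfl⟩ := hx
  induction hr using Submodule.span_induction with
  | zero => simp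
  | add x y _ _ hx hy => simp only [mul_add, map_add, hx, hy]
  | smul c x _ hx => simp only [mul_smul_comm, map_smul, hx]
  | mem x hx =>
  obtain ⟨v, rfl⟩ := hx
  let L : FQ →ₗ[ℂ] (List QGen →₀ ℂ) := (Nhat (q ^ 2) (q⁻¹ ^ 2)).comp
    ((LinearMap.mulRight ℂ (word v)).comp (LinearMap.mulLeft ℂ (word u)))
  have hL : ∀ x y, L (gQ x * gQ y) = N (q ^ 2) (q⁻¹ ^ 2) (u ++ x :: y :: v) := by
    intro x y
    rw [← Nhat_word]
    simp [L, word, mul_assoc]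
  refine rel_of_ap q hq L (fun x y hxy => ?_) a b h
  simp only [hL]
  exact key _ _ (by positivity) (by simp) _ u x y v rfl hxy

theorem Nhat_Rel (q : ℂ) (hq : q ≠ 0) (a b : FQ) (h : RingQuot.Rel (QRel q) a b) : ∀ p r : FQ,
    Nhat (q ^ 2) (q⁻¹ ^ 2) (p * a * r) = Nhat (q ^ 2) (q⁻¹ ^ 2) (p * b * r) := by
  induction h with
  | of h => exact Nhat_rel q hq _ _ h
  | add_left _ ih => intro p r; simp only [mul_add, add_mul, map_add, ih]
  | mul_left _ ih =>
    intro p r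
    simpa only [mul_assoc] using ih p (_ * r)
  | @mul_right a _ _ _ ih =>
    intro p r
    simpa only [mul_assoc] using ih (p * a) r

theorem Nhat_ker (q : ℂ) (hq : q ≠ 0) (a : FQ) (h : RingQuot.mkAlgHom ℂ (QRel q) a = 0) :
    Nhat (q ^ 2) (q⁻¹ ^ 2) a = 0 := by
  have h' : (RingQuot.mkRingHom (QRel q)) a = (RingQuot.mkRingHom (QRel q)) 0 := by
    rw [map_zero, ← h, ← RingQuot.mkAlgHom_coe ℂ]; rfl
  rw [RingQuot.mkRingHom_def] at h'
  have h2 : Quot.mk (RingQuot.Rel (QRel q)) a = Quot.mk (RingQuot.Rel (QRel q)) 0 :=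
    congrArg RingQuot.toQuot h'
  have := congrArg (Quot.lift (fun a => Nhat (q ^ 2) (q⁻¹ ^ 2) a) (fun a b hab => by
    simpa using Nhat_Rel q hq a b hab 1 1)) h2
  simpa using this

theorem mk_nf (q : ℂ) (e) : RingQuot.mkAlgHom ℂ (QRel q) (word (nf e)) = pbwDq q e := by
  simp only [nf, word_append, map_mul, pbwDq, mul_assoc]
  simp only [word, List.map_replicate, List.prod_replicate, map_pow]
  rfl

theorem mk_span (q : ℂ) (hq : q ≠ 0) (w : List QGen) :
    RingQuot.mkAlgHom ℂ (QRel q) (word w) ∈ Submodule.span ℂ (Set.range (pbwDq q)) := by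
  induction hn : val w using Nat.strong_induction_on generalizing w with
  | _ n ih =>
  subst hn
  by_cases h : ∃ p : List QGen × QGen × QGen × List QGen,
      w = p.1 ++ p.2.1 :: p.2.2.1 :: p.2.2.2 ∧ dg p.2.1 < dg p.2.2.1
  · obtain ⟨⟨u, x, y, v⟩, hw, hx⟩ := h
    simp only at hw hx
    let L : FQ →ₗ[ℂ] DqPlus q := (RingQuot.mkAlgHom ℂ (QRel q)).toLinearMap.comp
      ((LinearMap.mulRight ℂ (word v)).comp (LinearMap.mulLeft ℂ (word u)))
    have hL : ∀ x y, L (gQ x * gQ y) = RingQuot.mkAlgHom ℂ (QRel q) (word (u ++ x :: y :: v)) := by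
      intro x y
      simp [L, word, mul_assoc]
    have := ap_of_rel q hq L (fun a b h => by
      simp only [L, LinearMap.comp_apply, LinearMap.mulRight_apply, LinearMap.mulLeft_apply,
        AlgHom.toLinearMap_apply, map_mul, RingQuot.mkAlgHom_rel ℂ h]) x y hx
    rw [hw, ← hL, this, ap]
    refine list_sum_mem fun z hz => ?_
    obtain ⟨e, he, rfl⟩ := List.mem_map.1 hz
    refine Submodule.smul_mem _ _ ?_
    rw [hL]
    refine ih _ ?_ _ rfl
    rw [hw]
    exact val_lt _ _ _ _ _ _ (rhs_lt _ _ _ _ _ he)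
  · rw [← nf_cnt w (sorted_of w h), mk_nf]
    exact Submodule.subset_span ⟨_, rfl⟩

theorem main (q : ℂ) (hq : q ≠ 0) :
    LinearIndependent ℂ (pbwDq q) ∧
      Submodule.span ℂ (Set.range (pbwDq q)) = ⊤ := by
  constructor
  · rw [linearIndependent_iff]
    intro l hl
    have h1 : RingQuot.mkAlgHom ℂ (QRel q)
        (Finsupp.linearCombination ℂ (fun e => word (nf e)) l) = 0 := by
      rw [← hl, ← AlgHom.toLinearMap_apply, Finsupp.linearCombination_apply,
        Finsupp.linearCombination_apply, map_finsuppSum]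
      simp only [map_smul, AlgHom.toLinearMap_apply, mk_nf]
    have h2 := Nhat_ker q hq _ h1
    rw [Finsupp.linearCombination_apply, map_finsuppSum] at h2
    simp only [map_smul, Nhat_word, N_good _ _ _ (not_bad _ (nf_sorted _))] at h2
    have h3 : LinearIndependent ℂ (fun e => (Finsupp.single (nf e) 1 : List QGen →₀ ℂ)) :=
      (Finsupp.linearIndependent_single_one ℂ (List QGen)).comp nf
        (Function.LeftInverse.injective cnt_nf)
    rw [linearIndependent_iff] at h3
    exact h3 l (by rw [Finsupp.linearCombination_apply]; exact h2)
  · rw [eq_top_iff]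
    intro x _
    obtain ⟨a, rfl⟩ := RingQuot.mkAlgHom_surjective ℂ (QRel q) x
    have hp : a ∈ Submodule.span ℂ (Set.range word) := by rw [word_span]; trivial
    induction hp using Submodule.span_induction with
    | zero => simp
    | add x y _ _ hx hy => rw [map_add]; exact add_mem (hx trivial) (hy trivial)
    | smul c x _ hx => rw [map_smul]; exact Submodule.smul_mem _ _ (hx trivial)
    | mem x hx => obtain ⟨w, rfl⟩ := hx; exact mk_span q hq w

end DQ

/-- The ordered monomials
`a^{i₁}_{j₁}⋯a^{i_m}_{j_m}∂^{k₁}_{l₁}⋯∂^{k_n}_{l_n}`, with weakly lexicographically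
increasing index sequences, form a ℂ-vector-space basis of `𝒟q⁺(GL₂)`. -/
theorem stmt13 (q : ℂ) (hq : q ≠ 0) :
    LinearIndependent ℂ (pbwDq q) ∧
      Submodule.span ℂ (Set.range (pbwDq q)) = ⊤ := by
  exact DQ.main q hq
end
end

section
/- In the 2×2 matrices over 𝒟q⁺(GL₂) one has AÃ = ÃA = det_q(A)·I and DD̃ = D̃D = det_q(D)·I, where I is the identity matrix. -/
noncomputable section

/-- The matrix `A = (a^i_j)`. -/
def Amat (q : ℂ) : Matrix (Fin 2) (Fin 2) (DqPlus q) :=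
  !![a11 q, a12 q; a21 q, a22 q]

/-- The matrix `D = (∂^i_j)`. -/
def Dmat (q : ℂ) : Matrix (Fin 2) (Fin 2) (DqPlus q) :=
  !![p11 q, p12 q; p21 q, p22 q]

/-- The quantum adjugate matrix `Ã = [[a²₂, −q²a¹₂], [−q²a²₁, q²a¹₁ + (1−q²)a²₂]]`. -/
def Atil (q : ℂ) : Matrix (Fin 2) (Fin 2) (DqPlus q) :=
  !![a22 q, -((q ^ 2) • a12 q); -((q ^ 2) • a21 q), (q ^ 2) • a11 q + (1 - q ^ 2) • a22 q]

/-- The quantum adjugate matrix `D̃ = [[∂²₂, −q²∂¹₂], [−q²∂²₁, q²∂¹₁ + (1−q²)∂²₂]]`. -/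
def Dtil (q : ℂ) : Matrix (Fin 2) (Fin 2) (DqPlus q) :=
  !![p22 q, -((q ^ 2) • p12 q); -((q ^ 2) • p21 q), (q ^ 2) • p11 q + (1 - q ^ 2) • p22 q]

theorem adj_aux {R : Type*} [Ring R] [Algebra ℂ R] (q : ℂ) (hq : q ≠ 0) (a b c d : R)
    (h1 : b * a = a * b + (1 - q⁻¹ ^ 2) • (b * d))
    (h2 : d * a = a * d)
    (h3 : c * a = a * c - (1 - q⁻¹ ^ 2) • (d * c))
    (h4 : d * b = (q ^ 2) • (b * d))
    (h5 : c * b = b * c + (1 - q⁻¹ ^ 2) • (a * d - d * d))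
    (h6 : d * c = (q⁻¹ ^ 2) • (c * d)) :
    !![a, b; c, d] * !![d, -((q ^ 2) • b); -((q ^ 2) • c), (q ^ 2) • a + (1 - q ^ 2) • d]
      = Matrix.diagonal (fun _ => a * d - (q ^ 2) • (b * c)) ∧
    !![d, -((q ^ 2) • b); -((q ^ 2) • c), (q ^ 2) • a + (1 - q ^ 2) • d] * !![a, b; c, d]
      = Matrix.diagonal (fun _ => a * d - (q ^ 2) • (b * c)) := by
  constructor
  all_goals
    ext i j
    fin_cases i <;> fin_cases j <;>
    simp [Matrix.mul_apply, Fin.sum_univ_two, mul_add, add_mul, h1, h2, h3, h4, h5, h6] <;>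
    match_scalars <;> field_simp <;> ring

/-- In the 2×2 matrices over `𝒟q⁺(GL₂)` one has
`AÃ = ÃA = det_q(A)·I` and `DD̃ = D̃D = det_q(D)·I`. -/
theorem stmt14 (q : ℂ) (hq : q ≠ 0) :
    Amat q * Atil q = Matrix.diagonal (fun _ => detA q) ∧
    Atil q * Amat q = Matrix.diagonal (fun _ => detA q) ∧
    Dmat q * Dtil q = Matrix.diagonal (fun _ => detD q) ∧
    Dtil q * Dmat q = Matrix.diagonal (fun _ => detD q) := by
  have key : ∀ {x y : FQ}, QRel q x y →
      RingQuot.mkAlgHom ℂ (QRel q) x = RingQuot.mkAlgHom ℂ (QRel q) y :=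
    fun h => RingQuot.mkAlgHom_rel ℂ h
  have hA := adj_aux q hq (a11 q) (a12 q) (a21 q) (a22 q)
    (by simpa only [a11, a12, a21, a22, p11, p12, p21, p22, map_mul, map_add, map_sub, map_smul] using key QRel.a1)
    (by simpa only [a11, a12, a21, a22, p11, p12, p21, p22, map_mul, map_add, map_sub, map_smul] using key QRel.a2)
    (by simpa only [a11, a12, a21, a22, p11, p12, p21, p22, map_mul, map_add, map_sub, map_smul] using key QRel.a3)
    (by simpa only [a11, a12, a21, a22, p11, p12, p21, p22, map_mul, map_add, map_sub, map_smul] using key QRel.a4)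
    (by simpa only [a11, a12, a21, a22, p11, p12, p21, p22, map_mul, map_add, map_sub, map_smul] using key QRel.a5)
    (by simpa only [a11, a12, a21, a22, p11, p12, p21, p22, map_mul, map_add, map_sub, map_smul] using key QRel.a6)
  have hD := adj_aux q hq (p11 q) (p12 q) (p21 q) (p22 q)
    (by simpa only [a11, a12, a21, a22, p11, p12, p21, p22, map_mul, map_add, map_sub, map_smul] using key QRel.p1)
    (by simpa only [a11, a12, a21, a22, p11, p12, p21, p22, map_mul, map_add, map_sub, map_smul] using key QRel.p2)
    (by simpa only [a11, a12, a21, a22, p11, p12, p21, p22, map_mul, map_add, map_sub, map_smul] using key QRel.p3)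
    (by simpa only [a11, a12, a21, a22, p11, p12, p21, p22, map_mul, map_add, map_sub, map_smul] using key QRel.p4)
    (by simpa only [a11, a12, a21, a22, p11, p12, p21, p22, map_mul, map_add, map_sub, map_smul] using key QRel.p5)
    (by simpa only [a11, a12, a21, a22, p11, p12, p21, p22, map_mul, map_add, map_sub, map_smul] using key QRel.p6)
  exact ⟨hA.1, hA.2, hD.1, hD.2⟩
end
end
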